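/- Let N = 4 and let ρ ∈ (0,1]. With the radial cutoff ψ and U_ε as in the context, there exist constants C > 0 and ε₀ ∈ (0,1) such that for all ε ∈ (0, ε₀), ∫_{ℝ⁴} U_ε(x)²·log(U_ε(x)²) dx ≤ 8·log( 8e·(ε² + 4ρ²) / (ε² + ρ²)² )·ω₄·ε²·log(1/ε) + C·ε², where ω₄ = 2π² is the surface area of the unit sphere in ℝ⁴, with the convention 0·log 0 = 0. -/

import Mathlib

open MeasureTheory

/-
Where the cutoff is no longer identically `1` and `ε` is small, `0 ≤ U_ε² ≤ 1`, so that region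
contributes at most `0` to `∫ U_ε² log U_ε²`. On the ball `|x| ≤ ρ` the integrand is the radial
function `w log w` with `w = 8ε² / (ε² + r²)²`, and `r³ w log w` has an elementary antiderivative.
In its increment the `log² ε` terms cancel. After division by `8ε²`, with `l = log (ε² + ρ²)` and
`q = ε² / (ε² + ρ²)`, what remains apart from the `log (1/ε)` term is a quadratic polynomial in `l`
with leading coefficient `-1/2`; completing the square bounds it by a constant independent of `ρ`
and `ε`.
-/

open Real Set Metric Module

section Entropy

variable {α : Type*} [MeasurableSpace α] {μ : Measure α}

lemma integral_mul_log_le_setIntegral {w : α → ℝ} {s : Set α} (hs : MeasurableSet s)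
    (hint : Integrable (fun x ↦ w x * log (w x)) μ) (hw : ∀ x ∉ s, w x ∈ Icc 0 1) :
    ∫ x, w x * log (w x) ∂μ ≤ ∫ x in s, w x * log (w x) ∂μ := by
  have hcompl : ∫ x in sᶜ, w x * log (w x) ∂μ ≤ 0 :=
    setIntegral_nonpos hs.compl fun x hx ↦ mul_log_nonpos (hw x hx).1 (hw x hx).2
  linarith [integral_add_compl hs hint]

lemma integrable_mul_log_of_bounded {w : α → ℝ} {t : Set α} {M : ℝ} (ht : μ t ≠ ⊤)
    (hwm : AEStronglyMeasurable w μ) (hw : ∀ x, w x ∈ Icc 0 M) (hwt : ∀ x ∉ t, w x = 0) :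
    Integrable (fun x ↦ w x * log (w x)) μ := by
  obtain ⟨B, hB⟩ :=
    (isCompact_Icc (a := 0) (b := M)).exists_bound_of_continuousOn continuous_mul_log.continuousOn
  have hsupp : Function.support (fun x ↦ w x * log (w x)) ⊆ t :=
    Function.support_subset_iff'.2 fun x hx ↦ by simp [hwt x hx]
  rw [← integrableOn_iff_integrable_of_support_subset hsupp]
  exact Measure.integrableOn_of_bounded ht (continuous_mul_log.comp_aestronglyMeasurable hwm)
    (ae_of_all _ fun x ↦ hB _ (hw x))

end Entropy

section Radial

lemma setIntegral_closedBall_fun_norm_addHaar {E F : Type*} [NormedAddCommGroup E]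
    [NormedSpace ℝ E] [FiniteDimensional ℝ E] [Nontrivial E] [MeasurableSpace E] [BorelSpace E]
    (μ : Measure E) [μ.IsAddHaarMeasure] [NormedAddCommGroup F] [NormedSpace ℝ F] {R : ℝ}
    (hR : 0 ≤ R) (f : ℝ → F) :
    ∫ x in closedBall 0 R, f ‖x‖ ∂μ =
      finrank ℝ E • μ.real (ball 0 1) • ∫ r in 0..R, r ^ (finrank ℝ E - 1) • f r := by
  have hball : (closedBall (0 : E) R).indicator (fun x ↦ f ‖x‖) =
      fun x ↦ (Iic R).indicator f ‖x‖ := by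
    ext x; simp [indicator]
  rw [← integral_indicator measurableSet_closedBall, hball, integral_fun_norm_addHaar,
    intervalIntegral.integral_of_le hR, ← Ioi_inter_Iic, ← setIntegral_indicator measurableSet_Iic]
  simp only [indicator_smul]

lemma setIntegral_closedBall_fun_norm_of_finrank_eq_four {E : Type*} [NormedAddCommGroup E]
    [InnerProductSpace ℝ E] [FiniteDimensional ℝ E] [MeasurableSpace E] [BorelSpace E]
    (hE : finrank ℝ E = 4) {R : ℝ} (hR : 0 ≤ R) (f : ℝ → ℝ) :
    ∫ x in closedBall (0 : E) R, f ‖x‖ = 2 * π ^ 2 * ∫ r in 0..R, r ^ 3 * f r := by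
  have : Nontrivial E := nontrivial_of_finrank_pos (R := ℝ) (by lia)
  have hvol : volume.real (ball (0 : E) 1) = π ^ 2 / 2 := by
    rw [Measure.real, InnerProductSpace.volume_ball_of_dim_even (k := 2) hE]
    simp [Nat.factorial, show 0 ≤ π ^ 2 / 2 by positivity]
  rw [setIntegral_closedBall_fun_norm_addHaar volume hR, hE, hvol]
  simp only [nsmul_eq_mul, smul_eq_mul]
  push_cast
  ring

end Radial

section Profile

variable {a A : ℝ}

/-- An antiderivative in `r` of `r³ w log w` for the profile `w = A / (a + r²)²`, found by
integrating in the variable `a + r²`. -/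
noncomputable def entropyPrimitive (A a r : ℝ) : ℝ :=
  A * (log A / 2 * (log (a + r ^ 2) + a / (a + r ^ 2)) - log (a + r ^ 2) ^ 2 / 2
    - a * (log (a + r ^ 2) + 1) / (a + r ^ 2))

lemma hasDerivAt_entropyPrimitive (hA : A ≠ 0) (ha : 0 < a) (r : ℝ) :
    HasDerivAt (entropyPrimitive A a)
      (r ^ 3 * (A / (a + r ^ 2) ^ 2 * log (A / (a + r ^ 2) ^ 2))) r := by
  have hs : a + r ^ 2 ≠ 0 := by positivity
  have hsq : HasDerivAt (fun r : ℝ ↦ a + r ^ 2) (2 * r) r := by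
    simpa using (hasDerivAt_pow 2 r).const_add a
  have hlog := hsq.log hs
  have hinv := (hasDerivAt_const r a).div hsq hs
  have hquot := ((hlog.add_const 1).const_mul a).div hsq hs
  refine ((((hlog.add hinv).const_mul (log A / 2)).sub
    ((hlog.pow 2).div_const 2)).sub hquot).const_mul A |>.congr_deriv ?_
  rw [log_div hA (pow_ne_zero 2 hs), log_pow]
  field_simp
  ring

lemma integral_pow_three_mul_profile_mul_log (hA : A ≠ 0) (ha : 0 < a) (R : ℝ) :
    ∫ r in 0..R, r ^ 3 * (A / (a + r ^ 2) ^ 2 * log (A / (a + r ^ 2) ^ 2)) =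
      entropyPrimitive A a R - entropyPrimitive A a 0 := by
  have hw : Continuous fun r : ℝ ↦ A / (a + r ^ 2) ^ 2 :=
    continuous_const.div (by fun_prop) fun r ↦ by positivity
  have hcont : Continuous fun r : ℝ ↦ r ^ 3 * (A / (a + r ^ 2) ^ 2 * log (A / (a + r ^ 2) ^ 2)) :=
    (continuous_pow 3).mul (continuous_mul_log.comp hw)
  exact intervalIntegral.integral_eq_sub_of_hasDerivAt
    (fun r _ ↦ hasDerivAt_entropyPrimitive hA ha r) (hcont.intervalIntegrable 0 R)

end Profile

lemma mul_sq_le_sq_of_abs_le_one {K : Type*} [CommRing K] [LinearOrder K] [IsStrictOrderedRing K]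
    {t : K} (ht : |t| ≤ 1) (b : K) : (t * b) ^ 2 ≤ b ^ 2 := by
  rw [mul_pow]
  exact mul_le_of_le_one_left (sq_nonneg _) ((sq_le_one_iff_abs_le_one _).2 ht)

lemma log_eight_div_sub_one_le {ρ : ℝ} (hρ : ρ ≠ 0) (ε : ℝ) :
    log (8 / (ε ^ 2 + ρ ^ 2)) - 1 ≤
      log (8 * exp 1 * (ε ^ 2 + 4 * ρ ^ 2) / (ε ^ 2 + ρ ^ 2) ^ 2) := by
  calc log (8 / (ε ^ 2 + ρ ^ 2)) - 1 ≤ log (8 / (ε ^ 2 + ρ ^ 2)) := by linarith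
    _ = log (8 * 1 * (ε ^ 2 + ρ ^ 2) / (ε ^ 2 + ρ ^ 2) ^ 2) := by congr 1; field_simp
    _ ≤ log (8 * exp 1 * (ε ^ 2 + 4 * ρ ^ 2) / (ε ^ 2 + ρ ^ 2) ^ 2) := by
      gcongr
      · exact one_le_exp zero_le_one
      · nlinarith [sq_nonneg ρ]

/-- The radial profile of the four-dimensional Aubin–Talenti bubble of scale `ε`, as a function of
`r = ‖x‖`. -/
noncomputable def bubble (ε r : ℝ) : ℝ :=
  √8 * ε / (ε ^ 2 + r ^ 2)

namespace bubble

variable {ε ρ R : ℝ}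

lemma measurable (ε : ℝ) : Measurable (bubble ε) := by
  unfold bubble
  fun_prop

lemma sq_eq (ε r : ℝ) : bubble ε r ^ 2 = 8 * ε ^ 2 / (ε ^ 2 + r ^ 2) ^ 2 := by
  rw [bubble, div_pow, mul_pow, sq_sqrt (by norm_num)]

lemma sq_le_sq_zero (hε : ε ≠ 0) (r : ℝ) : bubble ε r ^ 2 ≤ bubble ε 0 ^ 2 := by
  rw [sq_eq, sq_eq]
  refine div_le_div_of_nonneg_left (by positivity) (by positivity) ?_
  gcongr (_ + ?_) ^ 2
  simpa using sq_nonneg r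

lemma sq_le_one (hρ : 0 ≤ ρ) (hερ : 8 * ε ^ 2 ≤ ρ ^ 4) {r : ℝ} (hr : ρ ≤ r) :
    bubble ε r ^ 2 ≤ 1 := by
  rw [sq_eq]
  refine div_le_one_of_le₀ ?_ (by positivity)
  calc 8 * ε ^ 2 ≤ (ρ ^ 2) ^ 2 := by linarith
    _ ≤ (ε ^ 2 + r ^ 2) ^ 2 := by gcongr; nlinarith

lemma entropyPrimitive_sub_zero (hε : 0 < ε) (R : ℝ) :
    entropyPrimitive (8 * ε ^ 2) (ε ^ 2) R - entropyPrimitive (8 * ε ^ 2) (ε ^ 2) 0 =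
      ε ^ 2 * (8 * (log (8 / (ε ^ 2 + R ^ 2)) - 1 - ε ^ 2 / (ε ^ 2 + R ^ 2)) * log (1 / ε)
        + (log 8 - 2) ^ 2 + 4
        - 4 * (log (ε ^ 2 + R ^ 2) - (log 8 / 2 - ε ^ 2 / (ε ^ 2 + R ^ 2))) ^ 2
        - 4 * (ε ^ 2 / (ε ^ 2 + R ^ 2)) * (2 - ε ^ 2 / (ε ^ 2 + R ^ 2))) := by
  have hlogA : log (8 * ε ^ 2) = log 8 + 2 * log ε := by
    rw [log_mul (by norm_num) (by positivity), log_pow]; norm_num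
  have hlogs : log (8 / (ε ^ 2 + R ^ 2)) = log 8 - log (ε ^ 2 + R ^ 2) :=
    log_div (by norm_num) (by positivity)
  have hlog0 : log (ε ^ 2 + 0 ^ 2) = 2 * log ε := by
    rw [zero_pow two_ne_zero, add_zero, log_pow]; norm_num
  have hq0 : ε ^ 2 / (ε ^ 2 + 0 ^ 2) = 1 := by
    rw [zero_pow two_ne_zero, add_zero, div_self (by positivity)]
  simp only [entropyPrimitive, mul_div_right_comm (ε ^ 2), hlogA, hlogs, hlog0, hq0, one_div,
    log_inv]
  ring

lemma integral_pow_three_mul_sq_mul_log_le (hε : 0 < ε) (hε1 : ε ≤ 1) (R : ℝ) :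
    ∫ r in 0..R, r ^ 3 * (bubble ε r ^ 2 * log (bubble ε r ^ 2)) ≤
      ε ^ 2 * (8 * (log (8 / (ε ^ 2 + R ^ 2)) - 1) * log (1 / ε) + ((log 8 - 2) ^ 2 + 4)) := by
  simp only [sq_eq]
  rw [integral_pow_three_mul_profile_mul_log (by positivity) (by positivity),
    entropyPrimitive_sub_zero hε]
  have hL : 0 ≤ log (1 / ε) := log_nonneg (one_le_one_div hε hε1)
  have hq0 : 0 ≤ ε ^ 2 / (ε ^ 2 + R ^ 2) := by positivity
  have hq1 : ε ^ 2 / (ε ^ 2 + R ^ 2) ≤ 1 := div_le_one_of_le₀ (by nlinarith) (by positivity)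
  gcongr
  nlinarith [mul_nonneg hq0 hL, mul_nonneg hq0 (sub_nonneg.2 hq1),
    sq_nonneg (log (ε ^ 2 + R ^ 2) - (log 8 / 2 - ε ^ 2 / (ε ^ 2 + R ^ 2)))]

section Cutoff

variable {ψ : ℝ → ℝ} {E : Type*} [NormedAddCommGroup E] [InnerProductSpace ℝ E]
  [FiniteDimensional ℝ E] [MeasurableSpace E] [BorelSpace E]

lemma integrable_sq_cutoff_mul_log (hε : ε ≠ 0) (hψm : Measurable ψ)
    (hψ : ∀ r, 0 ≤ r → |ψ r| ≤ 1) (hψ0 : ∀ r, R ≤ r → ψ r = 0) :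
    Integrable fun x : E ↦
      (ψ ‖x‖ * bubble ε ‖x‖) ^ 2 * log ((ψ ‖x‖ * bubble ε ‖x‖) ^ 2) := by
  have hmeas : Measurable fun x : E ↦ (ψ ‖x‖ * bubble ε ‖x‖) ^ 2 :=
    ((hψm.comp measurable_norm).mul ((measurable ε).comp measurable_norm)).pow_const 2
  refine integrable_mul_log_of_bounded (t := ball 0 R) (M := bubble ε 0 ^ 2)
    measure_ball_lt_top.ne hmeas.aestronglyMeasurable (fun x ↦ ⟨sq_nonneg _, ?_⟩) fun x hx ↦ ?_
  · exact (mul_sq_le_sq_of_abs_le_one (hψ _ (norm_nonneg x)) _).trans (sq_le_sq_zero hε _)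
  · rw [hψ0 ‖x‖ (by simpa using hx)]
    ring

lemma integral_sq_cutoff_mul_log_le_radial (hE : finrank ℝ E = 4) (hρ : 0 ≤ ρ) (hε : ε ≠ 0)
    (hερ : 8 * ε ^ 2 ≤ ρ ^ 4) (hψm : Measurable ψ) (hψ1 : ∀ r, 0 ≤ r → r ≤ ρ → ψ r = 1)
    (hψ : ∀ r, 0 ≤ r → |ψ r| ≤ 1) (hψ0 : ∀ r, R ≤ r → ψ r = 0) :
    ∫ x : E, (ψ ‖x‖ * bubble ε ‖x‖) ^ 2 * log ((ψ ‖x‖ * bubble ε ‖x‖) ^ 2) ≤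
      2 * π ^ 2 * ∫ r in 0..ρ, r ^ 3 * (bubble ε r ^ 2 * log (bubble ε r ^ 2)) := by
  have hle_one : ∀ x ∉ closedBall (0 : E) ρ, (ψ ‖x‖ * bubble ε ‖x‖) ^ 2 ∈ Icc (0 : ℝ) 1 := by
    intro x hx
    have hx' : ρ ≤ ‖x‖ := le_of_lt (by simpa using hx)
    exact ⟨sq_nonneg _,
      (mul_sq_le_sq_of_abs_le_one (hψ _ (norm_nonneg x)) _).trans (sq_le_one hρ hερ hx')⟩
  calc ∫ x : E, (ψ ‖x‖ * bubble ε ‖x‖) ^ 2 * log ((ψ ‖x‖ * bubble ε ‖x‖) ^ 2)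
      ≤ ∫ x in closedBall (0 : E) ρ,
          (ψ ‖x‖ * bubble ε ‖x‖) ^ 2 * log ((ψ ‖x‖ * bubble ε ‖x‖) ^ 2) :=
        integral_mul_log_le_setIntegral measurableSet_closedBall
          (integrable_sq_cutoff_mul_log hε hψm hψ hψ0) hle_one
    _ = ∫ x in closedBall (0 : E) ρ, bubble ε ‖x‖ ^ 2 * log (bubble ε ‖x‖ ^ 2) :=
        setIntegral_congr_fun measurableSet_closedBall fun x hx ↦ by
          simp only [hψ1 ‖x‖ (norm_nonneg x) (by simpa using hx), one_mul]
    _ = 2 * π ^ 2 * ∫ r in 0..ρ, r ^ 3 * (bubble ε r ^ 2 * log (bubble ε r ^ 2)) :=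
        setIntegral_closedBall_fun_norm_of_finrank_eq_four hE hρ
          fun r ↦ bubble ε r ^ 2 * log (bubble ε r ^ 2)

lemma integral_sq_cutoff_mul_log_le (hE : finrank ℝ E = 4) (hρ : 0 < ρ) (hε : 0 < ε)
    (hε1 : ε ≤ 1) (hερ : 8 * ε ^ 2 ≤ ρ ^ 4) (hψm : Measurable ψ)
    (hψ1 : ∀ r, 0 ≤ r → r ≤ ρ → ψ r = 1) (hψ : ∀ r, 0 ≤ r → |ψ r| ≤ 1)
    (hψ0 : ∀ r, R ≤ r → ψ r = 0) :
    ∫ x : E, (ψ ‖x‖ * bubble ε ‖x‖) ^ 2 * log ((ψ ‖x‖ * bubble ε ‖x‖) ^ 2) ≤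
      8 * log (8 * exp 1 * (ε ^ 2 + 4 * ρ ^ 2) / (ε ^ 2 + ρ ^ 2) ^ 2) * (2 * π ^ 2) * ε ^ 2 *
        log (1 / ε) + 2 * π ^ 2 * ((log 8 - 2) ^ 2 + 4) * ε ^ 2 := by
  have hL : 0 ≤ log (1 / ε) := log_nonneg (one_le_one_div hε hε1)
  calc ∫ x : E, (ψ ‖x‖ * bubble ε ‖x‖) ^ 2 * log ((ψ ‖x‖ * bubble ε ‖x‖) ^ 2)
      ≤ 2 * π ^ 2 * ∫ r in 0..ρ, r ^ 3 * (bubble ε r ^ 2 * log (bubble ε r ^ 2)) :=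
        integral_sq_cutoff_mul_log_le_radial hE hρ.le hε.ne' hερ hψm hψ1 hψ hψ0
    _ ≤ 2 * π ^ 2 * (ε ^ 2 * (8 * (log (8 / (ε ^ 2 + ρ ^ 2)) - 1) * log (1 / ε) +
          ((log 8 - 2) ^ 2 + 4))) := by
        gcongr
        exact integral_pow_three_mul_sq_mul_log_le hε hε1 ρ
    _ ≤ 2 * π ^ 2 * (ε ^ 2 *
          (8 * log (8 * exp 1 * (ε ^ 2 + 4 * ρ ^ 2) / (ε ^ 2 + ρ ^ 2) ^ 2) * log (1 / ε) +
          ((log 8 - 2) ^ 2 + 4))) := by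
        gcongr
        exact log_eight_div_sub_one_le hρ.ne' ε
    _ = _ := by ring

end Cutoff

end bubble

lemma abs_cutoff_le_one {ρ R : ℝ} {ψ : ℝ → ℝ} (hψ1 : ∀ r, 0 ≤ r → r ≤ ρ → ψ r = 1)
    (hψ01 : ∀ r, ρ ≤ r → r ≤ R → ψ r ∈ Icc (0 : ℝ) 1) (hψ0 : ∀ r, R ≤ r → ψ r = 0)
    (r : ℝ) (hr : 0 ≤ r) : |ψ r| ≤ 1 := by
  rcases le_total r ρ with hrρ | hrρ
  · simp [hψ1 r hr hrρ]
  rcases le_total r R with hrR | hrR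
  · exact abs_le.2 ⟨by linarith [(hψ01 r hrρ hrR).1], (hψ01 r hrρ hrR).2⟩
  · simp [hψ0 r hrR]

theorem stmt_12_general {E : Type*} [NormedAddCommGroup E] [InnerProductSpace ℝ E]
    [FiniteDimensional ℝ E] [MeasurableSpace E] [BorelSpace E] (hE : finrank ℝ E = 4)
    (u : ℝ → E → ℝ)
    (hu : ∀ ε : ℝ, 0 < ε → ∀ x : E, u ε x = √8 * ε / (ε ^ 2 + ‖x‖ ^ 2)) :
    ∃ C : ℝ, 0 < C ∧ ∀ ρ : ℝ, 0 < ρ → ∃ ε₀ ∈ Ioo (0 : ℝ) 1, ∀ (R : ℝ) (ψ : ℝ → ℝ),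
      Measurable ψ → (∀ r, 0 ≤ r → r ≤ ρ → ψ r = 1) → (∀ r, 0 ≤ r → |ψ r| ≤ 1) →
      (∀ r, R ≤ r → ψ r = 0) → ∀ ε ∈ Ioo (0 : ℝ) ε₀,
        (∫ x : E, (ψ ‖x‖ * u ε x) ^ 2 * log ((ψ ‖x‖ * u ε x) ^ 2)) ≤
          8 * log (8 * exp 1 * (ε ^ 2 + 4 * ρ ^ 2) / (ε ^ 2 + ρ ^ 2) ^ 2) * (2 * π ^ 2) *
            ε ^ 2 * log (1 / ε) + C * ε ^ 2 := by
  refine ⟨2 * π ^ 2 * ((log 8 - 2) ^ 2 + 4), by positivity, fun ρ hρ ↦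
    ⟨min (1 / 2) (ρ ^ 2 / 3), ⟨by positivity, (min_le_left _ _).trans_lt (by norm_num)⟩, ?_⟩⟩
  rintro R ψ hψm hψ1 hψ hψ0 ε ⟨hε, hεlt⟩
  obtain ⟨hε_half, hε_sq⟩ := lt_min_iff.1 hεlt
  have hερ : 8 * ε ^ 2 ≤ ρ ^ 4 := by nlinarith
  simp only [hu ε hε]
  exact bubble.integral_sq_cutoff_mul_log_le hE hρ hε (by linarith) hερ hψm hψ1 hψ hψ0

/-- Upper bound of Lemma 3.4 (`N = 4`): with `U_ε(x) = ψ(|x|) u_ε(x)`,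
`∫ U_ε² log U_ε² ≤ 8 log(8e(ε²+4ρ²)/(ε²+ρ²)²) ω₄ ε² log(1/ε) + O(ε²)`,
where `ω₄ = 2π²`. -/
theorem stmt_12 (ρ : ℝ) (hρ : ρ ∈ Set.Ioc (0 : ℝ) 1)
    (ψ : ℝ → ℝ) (hψs : ContDiff ℝ (⊤ : ℕ∞) ψ)
    (hψ1 : ∀ r : ℝ, 0 ≤ r → r ≤ ρ → ψ r = 1)
    (hψ01 : ∀ r : ℝ, ρ ≤ r → r ≤ 2 * ρ → ψ r ∈ Set.Icc (0 : ℝ) 1)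
    (hψ0 : ∀ r : ℝ, 2 * ρ ≤ r → ψ r = 0)
    (u : ℝ → EuclideanSpace ℝ (Fin 4) → ℝ)
    (hu : ∀ ε : ℝ, 0 < ε → ∀ x : EuclideanSpace ℝ (Fin 4),
      u ε x = Real.sqrt 8 * ε / (ε ^ 2 + ‖x‖ ^ 2)) :
    ∃ C : ℝ, 0 < C ∧ ∃ ε₀ ∈ Set.Ioo (0 : ℝ) 1, ∀ ε ∈ Set.Ioo (0 : ℝ) ε₀,
      (∫ x : EuclideanSpace ℝ (Fin 4),
          (ψ ‖x‖ * u ε x) ^ 2 * Real.log ((ψ ‖x‖ * u ε x) ^ 2)) ≤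
        8 * Real.log (8 * Real.exp 1 * (ε ^ 2 + 4 * ρ ^ 2) / (ε ^ 2 + ρ ^ 2) ^ 2) *
          (2 * Real.pi ^ 2) * ε ^ 2 * Real.log (1 / ε) + C * ε ^ 2 := by
  obtain ⟨C, hC, hbound⟩ := stmt_12_general finrank_euclideanSpace_fin u hu
  obtain ⟨ε₀, hε₀, hbound⟩ := hbound ρ hρ.1
  exact ⟨C, hC, ε₀, hε₀, hbound (2 * ρ) ψ hψs.continuous.measurable hψ1
    (abs_cutoff_le_one hψ1 hψ01 hψ0) hψ0⟩
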